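/- Assume that the Hardy–Littlewood prime pair conjecture holds uniformly for 2 ≤ d ≤ (log x)²; i.e., for every ε > 0 there exists x₀ such that for all x ≥ x₀ and all even integers d with 2 ≤ d ≤ (log x)² one has |π₂(x,d) − 𝔖(d)·x/(log x)²| ≤ ε·𝔖(d)·x/(log x)². Then the jumping champions tend to infinity: for every M > 0 there exists X such that for all x ≥ X, every jumping champion d* for x satisfies d* > M. -/

import Mathlib

open Filter Real

/-- The `n`-th prime, 1-indexed: `nthPrime 1 = 2`, `nthPrime 2 = 3`, ... -/
noncomputable def nthPrime (n : ℕ) : ℕ := Nat.nth Nat.Prime (n - 1)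

/-- `N x d` is the number of indices `n ≥ 2` with `pₙ ≤ x` and `pₙ - pₙ₋₁ = d`. -/
noncomputable def N (x : ℝ) (d : ℕ) : ℕ :=
  Set.ncard {n : ℕ | 2 ≤ n ∧ (nthPrime n : ℝ) ≤ x ∧ nthPrime n - nthPrime (n - 1) = d}

/-- `N* x`, the maximal number of occurrences of any gap among consecutive primes up to `x`. -/
noncomputable def Nstar (x : ℝ) : ℕ := sSup (Set.range fun d => N x d)

/-- A positive integer `d` is a jumping champion for `x` if `N x d` attains `max_d N x d`. -/
def JumpingChampion (x : ℝ) (d : ℕ) : Prop := 0 < d ∧ ∀ e : ℕ, N x e ≤ N x d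

/-- `pi2 x d` counts primes `q ≤ x` such that `q - d` is also prime. -/
noncomputable def pi2 (x : ℝ) (d : ℕ) : ℕ :=
  Set.ncard {q : ℕ | q.Prime ∧ (q : ℝ) ≤ x ∧ (q - d).Prime}

/-- `pi3 x d d'` counts primes `q ≤ x` such that `q - d` and `q - d'` are both prime. -/
noncomputable def pi3 (x : ℝ) (d d' : ℕ) : ℕ :=
  Set.ncard {q : ℕ | q.Prime ∧ (q : ℝ) ≤ x ∧ (q - d).Prime ∧ (q - d').Prime}

/-- The twin prime constant `C₂ = ∏_{p > 2} (1 - 1/(p-1)²)`. -/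
noncomputable def C2 : ℝ := ∏' q : {q : ℕ // q.Prime ∧ 2 < q}, (1 - 1 / ((q : ℕ) - 1 : ℝ) ^ 2)

/-- The singular series `𝔖(d)`. -/
noncomputable def singularSeries (d : ℕ) : ℝ :=
  if Even d then
    2 * C2 * ∏ q ∈ d.primeFactors.filter (fun q => 2 < q), ((q : ℝ) - 1) / ((q : ℝ) - 2)
  else 0

/-- `nu d' d q` is the number of distinct residue classes mod `q` occupied by `{0, d', d}`. -/
def nu (d' d : ℕ) (q : ℕ) : ℕ :=
  ({(0 : ZMod q), (d' : ZMod q), (d : ZMod q)} : Finset (ZMod q)).card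

/-- The singular series of the triple `{0, d', d}`. -/
noncomputable def tripleSingularSeries (d' d : ℕ) : ℝ :=
  ∏' q : Nat.Primes, ((1 - 1 / ((q : ℕ) : ℝ)) ^ 3)⁻¹ * (1 - (nu d' d q : ℝ) / ((q : ℕ) : ℝ))

/-- The `k`-th primorial, the product of the first `k` primes. -/
noncomputable def primorialN (k : ℕ) : ℕ := ∏ i ∈ Finset.range k, Nat.nth Nat.Prime i

/-- The index `n` of the largest primorial `𝒫ₙ ≤ y`. -/
noncomputable def primorialFloorIndex (y : ℝ) : ℕ := sSup {n : ℕ | (primorialN n : ℝ) ≤ y}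

/-- Chebyshev's theta function `ϑ(t) = ∑_{p ≤ t} log p`. -/
noncomputable def theta (t : ℝ) : ℝ :=
  ∑ q ∈ (Finset.range (⌊t⌋₊ + 1)).filter Nat.Prime, Real.log q

/-! The number of primes `q ≤ x` with `q - d` prime is of order `x / (log x)²`, and it differs from
`N x d` by at most the number of prime triples `q - d, q - d', q` with `0 < d' < d`. These triples
are negligible: Brun's pure sieve only admits sifting primes up to `exp ((log x) ^ α)` with `α < 1`,
but it still yields `O (x / (log x) ^ (3 α))`, which is `o (x / (log x)²)` for `α` close to `1`.
Hence `N x d ∼ 𝔖(d) x / (log x)²` for every fixed even `d > 0`. Since multiplying `d` by a large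
prime `p` increases `𝔖(d)` by the factor `(p - 1) / (p - 2)`, no fixed `d` can be a jumping champion
for arbitrarily large `x`. -/

open Asymptotics Topology
open scoped Finset

section Sieve

lemma abs_count_modEq_sub_div_le_one (X a : ℕ) {m : ℕ} (hm : 0 < m) :
    |(X.count (· ≡ a [MOD m]) : ℝ) - X / m| ≤ 1 := by
  have hm' : (0 : ℝ) < m := by exact_mod_cast hm
  have hdiv : (X : ℝ) / m = (X / m : ℕ) + ((X % m : ℕ) : ℝ) / m := by
    rw [eq_comm, ← eq_sub_iff_add_eq', div_eq_iff hm'.ne', sub_mul, div_mul_cancel₀ _ hm'.ne',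
      eq_sub_iff_add_eq']
    exact_mod_cast Nat.div_add_mod' X m
  have hmod : ((X % m : ℕ) : ℝ) / m < 1 := by
    rw [div_lt_one hm']
    exact_mod_cast Nat.mod_lt X hm
  have hmod_nonneg : 0 ≤ ((X % m : ℕ) : ℝ) / m := by positivity
  rw [Nat.count_modEq_card X hm a, hdiv, abs_le]
  split_ifs <;> constructor <;> push_cast <;> linarith

lemma exists_forall_mod_eq_iff_modEq_prod {ι : Type*} [Fintype ι] {m : ι → ℕ}
    (hm : Pairwise (Function.onFun Nat.Coprime m)) {r : ι → ℕ} (hr : ∀ i, r i < m i) :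
    ∃ a, ∀ n, (∀ i, n % m i = r i) ↔ n ≡ a [MOD ∏ i, m i] := by
  obtain ⟨a, ha⟩ := Nat.chineseRemainderOfFinset r m Finset.univ
    (fun i _ => (hr i).ne_bot) (fun i _ j _ hij => hm hij)
  have hmod (n : ℕ) (i : ι) : n % m i = r i ↔ n ≡ a [MOD m i] := by
    rw [← Nat.mod_eq_of_lt (hr i), ← Nat.ModEq.eq_1]
    exact ⟨fun h => h.trans (ha i (Finset.mem_univ i)).symm,
      fun h => h.trans (ha i (Finset.mem_univ i))⟩
  refine ⟨a, fun n => ?_⟩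
  simp only [hmod]
  refine ⟨fun h => ?_, fun h i => h.of_dvd (Finset.dvd_prod_of_mem m (Finset.mem_univ i))⟩
  rw [Nat.modEq_iff_dvd, Nat.cast_prod]
  exact Fintype.prod_dvd_of_coprime (fun i j hij => Nat.isCoprime_iff_coprime.2 (hm hij))
    fun i => Nat.modEq_iff_dvd.1 (h i)

lemma abs_card_filter_forall_mod_mem_sub_le {ι : Type*} [Fintype ι] {m : ι → ℕ}
    (hm : Pairwise (Function.onFun Nat.Coprime m)) (hm0 : ∀ i, 0 < m i) {Ω : ι → Finset ℕ}
    (hΩ : ∀ i, ∀ r ∈ Ω i, r < m i) (X : ℕ) :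
    |(#{n ∈ Finset.range X | ∀ i, n % m i ∈ Ω i} : ℝ) - X * ∏ i, (#(Ω i) : ℝ) / m i|
      ≤ ∏ i, (#(Ω i) : ℝ) := by
  classical
  have hfiber : ∀ r ∈ Fintype.piFinset Ω,
      |(#{n ∈ {n ∈ Finset.range X | ∀ i, n % m i ∈ Ω i} | (fun i => n % m i) = r} : ℝ)
        - X / ∏ i, (m i : ℝ)| ≤ 1 := by
    intro r hr
    rw [Fintype.mem_piFinset] at hr
    obtain ⟨a, ha⟩ := exists_forall_mod_eq_iff_modEq_prod hm fun i => hΩ i _ (hr i)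
    have hfilter : {n ∈ {n ∈ Finset.range X | ∀ i, n % m i ∈ Ω i} | (fun i => n % m i) = r}
        = {n ∈ Finset.range X | n ≡ a [MOD ∏ i, m i]} := by
      ext n
      simp only [Finset.mem_filter, funext_iff, ← ha]
      grind
    rw [hfilter, ← Nat.count_eq_card_filter_range, ← Nat.cast_prod]
    exact abs_count_modEq_sub_div_le_one X a (Finset.prod_pos fun i _ => hm0 i)
  have hcard : #{n ∈ Finset.range X | ∀ i, n % m i ∈ Ω i} = ∑ r ∈ Fintype.piFinset Ω,
      #{n ∈ {n ∈ Finset.range X | ∀ i, n % m i ∈ Ω i} | (fun i => n % m i) = r} :=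
    Finset.card_eq_sum_card_fiberwise fun n hn => by simpa using (Finset.mem_filter.1 hn).2
  have hmain : X * ∏ i, (#(Ω i) : ℝ) / m i
      = ∑ _r ∈ Fintype.piFinset Ω, X / ∏ i, (m i : ℝ) := by
    rw [Finset.sum_const, Fintype.card_piFinset, Finset.prod_div_distrib, nsmul_eq_mul,
      Nat.cast_prod]
    ring
  rw [hcard, hmain, Nat.cast_sum, ← Finset.sum_sub_distrib]
  calc |∑ r ∈ Fintype.piFinset Ω, _| ≤ ∑ _r ∈ Fintype.piFinset Ω, (1 : ℝ) :=
        (Finset.abs_sum_le_sum_abs _ _).trans (Finset.sum_le_sum hfiber)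
    _ = ∏ i, (#(Ω i) : ℝ) := by simp [Fintype.card_piFinset]

lemma abs_card_filter_forall_mem_mod_mem_sub_le {S : Finset ℕ}
    (hS : (S : Set ℕ).Pairwise Nat.Coprime) (hS0 : ∀ q ∈ S, 0 < q) {Ω : ℕ → Finset ℕ}
    (hΩ : ∀ q ∈ S, ∀ r ∈ Ω q, r < q) (X : ℕ) :
    |(#{n ∈ Finset.range X | ∀ q ∈ S, n % q ∈ Ω q} : ℝ) - X * ∏ q ∈ S, (#(Ω q) : ℝ) / q|
      ≤ ∏ q ∈ S, (#(Ω q) : ℝ) := by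
  have h := abs_card_filter_forall_mod_mem_sub_le (ι := S) (m := (↑))
    (fun p q hpq => hS p.2 q.2 (Subtype.coe_injective.ne hpq)) (fun q => hS0 q q.2)
    (Ω := fun q => Ω q) (fun q => hΩ q q.2) X
  simp only [Subtype.forall] at h
  rwa [S.prod_coe_sort fun q => (#(Ω q) : ℝ) / q, S.prod_coe_sort fun q => (#(Ω q) : ℝ)] at h

lemma sum_powerset_card_le_neg_one_pow_card {ι : Type*} {W : Finset ι} (hW : W.Nonempty) (k : ℕ) :
    ∑ S ∈ W.powerset with #S ≤ k, (-1 : ℤ) ^ #S = (-1) ^ k * (#W - 1).choose k := by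
  classical
  have hslice : ∀ j ∈ Finset.range (k + 1),
      ∑ S ∈ {S ∈ W.powerset | #S ≤ k} with #S = j, (-1 : ℤ) ^ #S = (-1) ^ j * (#W).choose j := by
    intro j hj
    have hpow : {S ∈ {S ∈ W.powerset | #S ≤ k} | #S = j} = W.powersetCard j := by
      grind
    rw [hpow, Finset.sum_congr rfl fun S hS => by rw [(Finset.mem_powersetCard.1 hS).2],
      Finset.sum_const, Finset.card_powersetCard, nsmul_eq_mul, mul_comm]
  rw [← Finset.sum_fiberwise_of_maps_to (g := Finset.card) (t := Finset.range (k + 1)) (by grind),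
    Finset.sum_congr rfl hslice, ← Int.alternating_sum_range_choose_eq_choose,
    Nat.sub_add_cancel hW.card_pos]

lemma ite_eq_empty_le_sum_powerset_card_le {ι : Type*} [DecidableEq ι] (W : Finset ι) {k : ℕ}
    (hk : Even k) :
    (if W = ∅ then 1 else 0 : ℤ) ≤ ∑ S ∈ W.powerset with #S ≤ k, (-1 : ℤ) ^ #S := by
  rcases W.eq_empty_or_nonempty with rfl | hW
  · simp [Finset.filter_singleton]
  · rw [if_neg hW.ne_empty, sum_powerset_card_le_neg_one_pow_card hW, hk.neg_one_pow]
    positivity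

/-- Bonferroni's inequality: for each `a`, inclusion–exclusion over the conditions satisfied by `a`
is truncated after an even level. -/
lemma card_filter_forall_not_le_sum {α ι : Type*} (A : Finset α) (Q : Finset ι)
    (R : ι → α → Prop) [∀ i a, Decidable (R i a)] {k : ℕ} (hk : Even k) :
    (#{a ∈ A | ∀ i ∈ Q, ¬ R i a} : ℤ)
      ≤ ∑ S ∈ Q.powerset with #S ≤ k, (-1) ^ #S * (#{a ∈ A | ∀ i ∈ S, R i a} : ℤ) := by
  classical
  have hpoint (a : α) : (if ∀ i ∈ Q, ¬ R i a then 1 else 0 : ℤ)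
      ≤ ∑ S ∈ Q.powerset with #S ≤ k, if ∀ i ∈ S, R i a then (-1) ^ #S else 0 := by
    convert ite_eq_empty_le_sum_powerset_card_le {i ∈ Q | R i a} hk using 1
    · simp only [Finset.filter_eq_empty_iff]
    · rw [← Finset.sum_filter]
      congr 1
      grind
  simp only [Finset.card_filter, Nat.cast_sum, Finset.mul_sum]
  rw [Finset.sum_comm]
  simpa using Finset.sum_le_sum fun a (_ : a ∈ A) => hpoint a

/-- Rankin's trick: on `𝓕` the weight `y ^ (#S - k)` is at least `1`, and inserting it turns the
sum into a part of the expansion of a product. -/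
lemma sum_prod_le_of_forall_pow_le {ι : Type*} {Q : Finset ι} {f : ι → ℝ} (hf : ∀ i ∈ Q, 0 ≤ f i)
    {y : ℝ} (hy : 0 < y) {k : ℕ} {𝓕 : Finset (Finset ι)} (h𝓕Q : 𝓕 ⊆ Q.powerset)
    (h𝓕 : ∀ S ∈ 𝓕, y ^ k ≤ y ^ #S) :
    ∑ S ∈ 𝓕, ∏ i ∈ S, f i ≤ (y ^ k)⁻¹ * exp (y * ∑ i ∈ Q, f i) := by
  have hprod_nonneg : ∀ S ∈ Q.powerset, 0 ≤ ∏ i ∈ S, y * f i := fun S hS =>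
    Finset.prod_nonneg fun i hi => mul_nonneg hy.le (hf i (Finset.mem_powerset.1 hS hi))
  have hterm : ∀ S ∈ 𝓕, y ^ k * ∏ i ∈ S, f i ≤ ∏ i ∈ S, y * f i := by
    intro S hS
    rw [Finset.prod_mul_distrib, Finset.prod_const]
    exact mul_le_mul_of_nonneg_right (h𝓕 S hS) (Finset.prod_nonneg fun i hi =>
      hf i (Finset.mem_powerset.1 (h𝓕Q hS) hi))
  rw [← div_eq_inv_mul, le_div_iff₀' (pow_pos hy k), Finset.mul_sum]
  calc ∑ S ∈ 𝓕, y ^ k * ∏ i ∈ S, f i ≤ ∑ S ∈ 𝓕, ∏ i ∈ S, y * f i := Finset.sum_le_sum hterm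
    _ ≤ ∑ S ∈ Q.powerset, ∏ i ∈ S, y * f i :=
        Finset.sum_le_sum_of_subset_of_nonneg h𝓕Q fun S hS _ => hprod_nonneg S hS
    _ = ∏ i ∈ Q, (1 + y * f i) := (Finset.prod_one_add Q).symm
    _ ≤ ∏ i ∈ Q, exp (y * f i) := Finset.prod_le_prod
        (fun i hi => add_nonneg zero_le_one (mul_nonneg hy.le (hf i hi)))
        fun i _ => add_comm (1 : ℝ) _ ▸ add_one_le_exp _
    _ = exp (y * ∑ i ∈ Q, f i) := by rw [← exp_sum, Finset.mul_sum]

lemma sum_powerset_card_le_neg_one_pow_mul_prod_le {ι : Type*} {Q : Finset ι} {f : ι → ℝ}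
    (hf0 : ∀ i ∈ Q, 0 ≤ f i) (hf1 : ∀ i ∈ Q, f i ≤ 1) (k : ℕ) :
    ∑ S ∈ Q.powerset with #S ≤ k, (-1) ^ #S * ∏ i ∈ S, f i
      ≤ exp (-∑ i ∈ Q, f i) + exp (-k) * exp (exp 1 * ∑ i ∈ Q, f i) := by
  have hfull : ∑ S ∈ Q.powerset, (-1) ^ #S * ∏ i ∈ S, f i ≤ exp (-∑ i ∈ Q, f i) :=
    calc ∑ S ∈ Q.powerset, (-1) ^ #S * ∏ i ∈ S, f i = ∏ i ∈ Q, (1 - f i) := by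
          simp only [sub_eq_add_neg, Finset.prod_one_add, Finset.prod_neg]
      _ ≤ ∏ i ∈ Q, exp (-f i) := Finset.prod_le_prod (fun i hi => sub_nonneg.2 (hf1 i hi))
          fun i _ => one_sub_le_exp_neg (f i)
      _ = exp (-∑ i ∈ Q, f i) := by rw [← exp_sum, Finset.sum_neg_distrib]
  have htail : -∑ S ∈ Q.powerset with ¬ #S ≤ k, (-1) ^ #S * ∏ i ∈ S, f i
      ≤ exp (-k) * exp (exp 1 * ∑ i ∈ Q, f i) :=
    calc -∑ S ∈ Q.powerset with ¬ #S ≤ k, (-1) ^ #S * ∏ i ∈ S, f i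
        ≤ ∑ S ∈ Q.powerset with ¬ #S ≤ k, ∏ i ∈ S, f i := by
          rw [← Finset.sum_neg_distrib]
          refine Finset.sum_le_sum fun S hS => ?_
          have hprod : 0 ≤ ∏ i ∈ S, f i := Finset.prod_nonneg fun i hi => hf0 i (by grind)
          rcases neg_one_pow_eq_or ℝ #S with h | h <;> rw [h] <;> linarith
      _ ≤ (exp 1 ^ k)⁻¹ * exp (exp 1 * ∑ i ∈ Q, f i) :=
          sum_prod_le_of_forall_pow_le hf0 (exp_pos 1) (Finset.filter_subset _ _) fun S hS =>
            pow_le_pow_right₀ (one_le_exp zero_le_one) (not_le.1 (Finset.mem_filter.1 hS).2).le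
      _ = exp (-k) * exp (exp 1 * ∑ i ∈ Q, f i) := by rw [← exp_nat_mul, mul_one, exp_neg]
  linarith [Finset.sum_filter_add_sum_filter_not Q.powerset (fun S => #S ≤ k)
    fun S => (-1) ^ #S * ∏ i ∈ S, f i]

/-- Brun's pure sieve. Besides the truncation level `k`, the weight `z` is free: the remainder
`∑ ∏ #(Ω q)` over `#S ≤ k` is bounded by Rankin's trick with `y = 1 / z`. -/
theorem brun_sieve {Q : Finset ℕ} (hQ : (Q : Set ℕ).Pairwise Nat.Coprime) (hQ0 : ∀ q ∈ Q, 0 < q)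
    {Ω : ℕ → Finset ℕ} (hΩ : ∀ q ∈ Q, ∀ r ∈ Ω q, r < q) (X : ℕ) {k : ℕ} (hk : Even k)
    {z : ℝ} (hz : 1 ≤ z) :
    (#{n ∈ Finset.range X | ∀ q ∈ Q, n % q ∉ Ω q} : ℝ) ≤
      X * (exp (-∑ q ∈ Q, (#(Ω q) : ℝ) / q) + exp (-k) * exp (exp 1 * ∑ q ∈ Q, (#(Ω q) : ℝ) / q))
        + z ^ k * exp ((∑ q ∈ Q, (#(Ω q) : ℝ)) / z) := by
  have hbonferroni : (#{n ∈ Finset.range X | ∀ q ∈ Q, n % q ∉ Ω q} : ℝ) ≤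
      ∑ S ∈ Q.powerset with #S ≤ k,
        (-1) ^ #S * (#{n ∈ Finset.range X | ∀ q ∈ S, n % q ∈ Ω q} : ℝ) := by
    exact_mod_cast card_filter_forall_not_le_sum (Finset.range X) Q (fun q n => n % q ∈ Ω q) hk
  have hlocal : ∀ S ∈ Q.powerset.filter (#· ≤ k),
      (-1) ^ #S * (#{n ∈ Finset.range X | ∀ q ∈ S, n % q ∈ Ω q} : ℝ) ≤
        X * ((-1) ^ #S * ∏ q ∈ S, (#(Ω q) : ℝ) / q) + ∏ q ∈ S, (#(Ω q) : ℝ) := by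
    intro S hS
    have hSQ : S ⊆ Q := Finset.mem_powerset.1 (Finset.mem_filter.1 hS).1
    have hcard := abs_le.1 (abs_card_filter_forall_mem_mod_mem_sub_le
      (hQ.mono (Finset.coe_subset.2 hSQ)) (fun q hq => hQ0 q (hSQ hq))
      (fun q hq => hΩ q (hSQ hq)) X)
    rcases neg_one_pow_eq_or ℝ #S with h | h <;> rw [h] <;> linarith [hcard.1, hcard.2]
  have hcard_le : ∀ q ∈ Q, #(Ω q) ≤ q := fun q hq => by
    simpa using Finset.card_le_card fun r hr => Finset.mem_range.2 (hΩ q hq r hr)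
  have hmain := sum_powerset_card_le_neg_one_pow_mul_prod_le (Q := Q)
    (f := fun q => (#(Ω q) : ℝ) / q) (fun q _ => by positivity)
    (fun q hq => div_le_one_of_le₀ (by exact_mod_cast hcard_le q hq) q.cast_nonneg) k
  have herror : ∑ S ∈ Q.powerset with #S ≤ k, ∏ q ∈ S, (#(Ω q) : ℝ)
      ≤ z ^ k * exp ((∑ q ∈ Q, (#(Ω q) : ℝ)) / z) := by
    have h := sum_prod_le_of_forall_pow_le (Q := Q) (f := fun q => (#(Ω q) : ℝ))
      (fun q _ => Nat.cast_nonneg _) (inv_pos.2 (one_pos.trans_le hz)) (k := k)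
      (Finset.filter_subset (#· ≤ k) _) fun S hS => pow_le_pow_of_le_one
        (inv_nonneg.2 (zero_le_one.trans hz)) (inv_le_one_of_one_le₀ hz) (Finset.mem_filter.1 hS).2
    rwa [inv_pow, inv_inv, ← div_eq_inv_mul] at h
  calc _ ≤ ∑ S ∈ Q.powerset with #S ≤ k,
        (X * ((-1) ^ #S * ∏ q ∈ S, (#(Ω q) : ℝ) / q) + ∏ q ∈ S, (#(Ω q) : ℝ)) :=
        hbonferroni.trans (Finset.sum_le_sum hlocal)
    _ = X * ∑ S ∈ Q.powerset with #S ≤ k, ((-1) ^ #S * ∏ q ∈ S, (#(Ω q) : ℝ) / q)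
        + ∑ S ∈ Q.powerset with #S ≤ k, ∏ q ∈ S, (#(Ω q) : ℝ) := by
        rw [Finset.sum_add_distrib, Finset.mul_sum]
    _ ≤ _ := by gcongr

end Sieve

section SumInvPrimes

lemma log_le_prod_primesBelow {n : ℕ} (hn : n ≠ 0) :
    log n ≤ ∏ p ∈ n.primesBelow, (1 - (p : ℝ)⁻¹)⁻¹ := by
  obtain ⟨m, rfl⟩ := Nat.exists_eq_succ_of_ne_zero hn
  let inv : ℕ →* ℝ :=
    { toFun := fun k => (k : ℝ)⁻¹
      map_one' := by simp
      map_mul' := fun a b => by rw [Nat.cast_mul, mul_inv] }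
  have hinv : ∀ {p : ℕ}, p.Prime → ‖inv p‖ < 1 := fun {p} hp => by
    simpa [inv] using inv_lt_one_of_one_lt₀ (by exact_mod_cast hp.one_lt : (1 : ℝ) < p)
  have hEuler := (EulerProduct.summable_and_hasSum_smoothNumbers_prod_primesBelow_geometric hinv
    (m + 1)).2
  let smooth : Fin m ↪ (m + 1).smoothNumbers :=
    ⟨fun i => ⟨i + 1, Nat.mem_smoothNumbers_of_lt i.val.succ_pos (by omega)⟩,
      fun i j hij => Fin.ext (Nat.succ_injective (congrArg Subtype.val hij))⟩
  calc log (m + 1 : ℕ) ≤ harmonic m := log_add_one_le_harmonic m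
    _ = ∑ k ∈ Finset.univ.map smooth, inv k := by
        have hsmooth (i : Fin m) : inv (smooth i) = ((i + 1 : ℕ) : ℝ)⁻¹ := rfl
        simp [harmonic, Finset.sum_range, hsmooth]
    _ ≤ ∏ p ∈ (m + 1).primesBelow, (1 - inv p)⁻¹ :=
        sum_le_hasSum _ (fun k _ => by simp [inv]) hEuler
    _ = ∏ p ∈ (m + 1).primesBelow, (1 - (p : ℝ)⁻¹)⁻¹ := by simp [inv]

lemma inv_one_sub_inv_le_exp {y : ℝ} (hy : 2 ≤ y) :
    (1 - y⁻¹)⁻¹ ≤ exp (y⁻¹ + 2 * (y ^ 2)⁻¹) := by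
  refine le_trans ?_ (add_one_le_exp _)
  have hy1 : 0 < y - 1 := by linarith
  rw [show (1 - y⁻¹)⁻¹ = y / (y - 1) by field_simp, div_le_iff₀ hy1]
  field_simp
  nlinarith

lemma log_log_sub_two_le_sum_inv_primesBelow {n : ℕ} (hn : 2 ≤ n) :
    log (log n) - 2 ≤ ∑ p ∈ n.primesBelow, (p : ℝ)⁻¹ := by
  have hsq : ∑ p ∈ n.primesBelow, ((p : ℝ) ^ 2)⁻¹ ≤ 1 :=
    calc ∑ p ∈ n.primesBelow, ((p : ℝ) ^ 2)⁻¹ ≤ ∑ i ∈ Finset.Ioc 1 n, ((i : ℝ) ^ 2)⁻¹ :=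
          Finset.sum_le_sum_of_subset_of_nonneg (fun p hp => Finset.mem_Ioc.2
            ⟨(Nat.prime_of_mem_primesBelow hp).one_lt, (Nat.lt_of_mem_primesBelow hp).le⟩)
            fun _ _ _ => by positivity
      _ ≤ ((1 : ℕ) : ℝ)⁻¹ - (n : ℝ)⁻¹ := sum_Ioc_inv_sq_le_sub one_ne_zero (by omega)
      _ ≤ 1 := by simp
  have hprod : log n ≤ exp (∑ p ∈ n.primesBelow, ((p : ℝ)⁻¹ + 2 * ((p : ℝ) ^ 2)⁻¹)) := by
    rw [exp_sum]
    refine (log_le_prod_primesBelow (by omega)).trans (Finset.prod_le_prod (fun p _ => ?_)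
      fun p hp => inv_one_sub_inv_le_exp ?_)
    · simpa using Nat.cast_inv_le_one p
    · exact_mod_cast (Nat.prime_of_mem_primesBelow hp).two_le
  have hlog := (log_le_iff_le_exp (log_pos (by exact_mod_cast hn))).2 hprod
  rw [Finset.sum_add_distrib, ← Finset.mul_sum] at hlog
  linarith

lemma exists_subset_le_sum_le_add {ι : Type*} {s : Finset ι} {f : ι → ℝ} {b σ : ℝ} (hb : 0 ≤ b)
    (hf : ∀ i ∈ s, f i ≤ b) (hσ0 : 0 ≤ σ) (hσ : σ ≤ ∑ i ∈ s, f i) :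
    ∃ t ⊆ s, σ ≤ ∑ i ∈ t, f i ∧ ∑ i ∈ t, f i ≤ σ + b := by
  classical
  induction s using Finset.induction_on with
  | empty => exact ⟨∅, subset_rfl, hσ, by simpa using add_nonneg hσ0 hb⟩
  | insert a s ha ih =>
    by_cases hs : σ ≤ ∑ i ∈ s, f i
    · obtain ⟨t, hts, ht⟩ := ih (fun i hi => hf i (Finset.mem_insert_of_mem hi)) hs
      exact ⟨t, hts.trans (Finset.subset_insert a s), ht⟩
    · refine ⟨insert a s, subset_rfl, hσ, ?_⟩
      rw [Finset.sum_insert ha]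
      linarith [hf a (Finset.mem_insert_self a s)]

lemma exists_subset_primesBelow_sum_inv_mem (D : ℕ) : ∃ A : ℝ, ∀ (z : ℕ) (σ : ℝ), 2 ≤ z → 0 ≤ σ →
    σ ≤ log (log z) - A → ∃ Q ⊆ z.primesBelow, (∀ p ∈ Q, D < p) ∧
      σ ≤ ∑ p ∈ Q, (p : ℝ)⁻¹ ∧ ∑ p ∈ Q, (p : ℝ)⁻¹ ≤ σ + 1 := by
  refine ⟨2 + ∑ p ∈ (D + 1).primesBelow, (p : ℝ)⁻¹, fun z σ hz hσ0 hσ => ?_⟩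
  have hlarge : σ ≤ ∑ p ∈ z.primesBelow with D < p, (p : ℝ)⁻¹ := by
    have hsmall : ∑ p ∈ z.primesBelow with ¬ D < p, (p : ℝ)⁻¹
        ≤ ∑ p ∈ (D + 1).primesBelow, (p : ℝ)⁻¹ :=
      Finset.sum_le_sum_of_subset_of_nonneg (fun p hp => by
        simp only [Finset.mem_filter, Nat.mem_primesBelow] at hp ⊢
        exact ⟨by omega, hp.1.2⟩) fun _ _ _ => by positivity
    linarith [log_log_sub_two_le_sum_inv_primesBelow hz,
      Finset.sum_filter_add_sum_filter_not z.primesBelow (D < ·) fun p => (p : ℝ)⁻¹]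
  obtain ⟨Q, hQ, hsum⟩ := exists_subset_le_sum_le_add zero_le_one
    (fun p _ => Nat.cast_inv_le_one p) hσ0 hlarge
  exact ⟨Q, hQ.trans (Finset.filter_subset _ _), fun p hp => (Finset.mem_filter.1 (hQ hp)).2, hsum⟩

end SumInvPrimes

section PrimeTuples

/-- The number of `q ≤ x` such that `q - c` is prime for every `c ∈ C`. The truncated subtraction is
harmless: `q - c` can only be prime if `c < q`. -/
noncomputable def primeTupleCount (C : Finset ℕ) (x : ℝ) : ℕ :=
  Set.ncard {q : ℕ | (q : ℝ) ≤ x ∧ ∀ c ∈ C, (q - c).Prime}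

lemma finite_setOf_natCast_le (x : ℝ) : {q : ℕ | (q : ℝ) ≤ x}.Finite :=
  (Set.finite_Iic ⌊x⌋₊).subset fun _ hq => Nat.le_floor hq

lemma primeTupleCount_le_card_filter {C : Finset ℕ} {D : ℕ} (hD : ∀ c ∈ C, c ≤ D) {Q : Finset ℕ}
    {z : ℕ} (hQ : Q ⊆ z.primesBelow) (x : ℝ) :
    primeTupleCount C x ≤ z + D + #{n ∈ Finset.range (⌊x⌋₊ + 1) | ∀ p ∈ Q, n % p ∉ C} := by
  have hsub : {q : ℕ | (q : ℝ) ≤ x ∧ ∀ c ∈ C, (q - c).Prime} ⊆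
      ↑(Finset.range (z + D) ∪ {n ∈ Finset.range (⌊x⌋₊ + 1) | ∀ p ∈ Q, n % p ∉ C}) := by
    rintro q ⟨hqx, hq⟩
    rw [Finset.mem_coe, Finset.mem_union, Finset.mem_filter, Finset.mem_range, Finset.mem_range,
      Nat.lt_succ_iff]
    refine or_iff_not_imp_left.2 fun hqz => ⟨Nat.le_floor hqx, fun p hp hc => ?_⟩
    have hp_dvd : p ∣ q - q % p := Nat.dvd_sub_mod q
    have hp_eq := (Nat.prime_dvd_prime_iff_eq (Nat.prime_of_mem_primesBelow (hQ hp)) (hq _ hc)).1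
      hp_dvd
    have := Nat.lt_of_mem_primesBelow (hQ hp)
    have := hD _ hc
    omega
  calc primeTupleCount C x ≤ _ := Set.ncard_le_ncard hsub (Finset.finite_toSet _)
    _ ≤ _ := by
      rw [Set.ncard_coe_finset]
      exact (Finset.card_union_le _ _).trans_eq (by rw [Finset.card_range])

lemma primeTupleCount_le_brun_sieve {C : Finset ℕ} {D : ℕ} (hD : ∀ c ∈ C, c ≤ D) {Q : Finset ℕ}
    {z : ℕ} (hQz : Q ⊆ z.primesBelow) (hQD : ∀ p ∈ Q, D < p) (hz : z ≠ 0) {x : ℝ} (hx : 0 ≤ x)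
    {k : ℕ} (hk : Even k) :
    (primeTupleCount C x : ℝ) ≤ z + D + (x + 1) * (exp (-(#C * ∑ p ∈ Q, (p : ℝ)⁻¹))
      + exp (-k) * exp (exp 1 * (#C * ∑ p ∈ Q, (p : ℝ)⁻¹))) + z ^ k * exp #C := by
  have hprime : ∀ p ∈ Q, p.Prime := fun p hp => Nat.prime_of_mem_primesBelow (hQz hp)
  have hsieve := brun_sieve (Q := Q) (Ω := fun _ => C)
    (fun p hp q hq hpq => (Nat.coprime_primes (hprime p hp) (hprime q hq)).2 hpq)
    (fun p hp => (hprime p hp).pos) (fun p hp c hc => (hD c hc).trans_lt (hQD p hp)) (⌊x⌋₊ + 1) hk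
    (z := z) (by exact_mod_cast Nat.one_le_iff_ne_zero.2 hz)
  have hcardQ : #Q ≤ z := calc
    #Q ≤ #(Finset.range z) := Finset.card_le_card (hQz.trans (Finset.filter_subset _ _))
    _ = z := Finset.card_range z
  have hfloor : ((⌊x⌋₊ + 1 : ℕ) : ℝ) ≤ x + 1 := by
    push_cast
    linarith [Nat.floor_le hx]
  have herror : (∑ _p ∈ Q, (#C : ℝ)) / z ≤ #C := by
    rw [Finset.sum_const, nsmul_eq_mul, div_le_iff₀ (by positivity), mul_comm]
    gcongr
  simp only [div_eq_mul_inv (#C : ℝ), ← Finset.mul_sum] at hsieve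
  calc (primeTupleCount C x : ℝ)
      ≤ z + D + #{n ∈ Finset.range (⌊x⌋₊ + 1) | ∀ p ∈ Q, n % p ∉ C} := by
        exact_mod_cast primeTupleCount_le_card_filter hD hQz x
    _ ≤ z + D + (_ + _) := add_le_add_right hsieve _
    _ ≤ _ := by
        rw [← add_assoc]
        gcongr

lemma exists_primeTupleCount_le (C : Finset ℕ) : ∃ A D : ℝ, ∀ (x σ : ℝ) (z k : ℕ), 0 ≤ x → 0 ≤ σ →
    2 ≤ z → σ ≤ log (log z) - A → Even k → (primeTupleCount C x : ℝ) ≤ z + D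
      + (x + 1) * (exp (-(#C * σ)) + exp (-k) * exp (exp 1 * (#C * (σ + 1)))) + z ^ k * exp #C := by
  obtain ⟨A, hA⟩ := exists_subset_primesBelow_sum_inv_mem (C.sup id)
  refine ⟨A, (C.sup id : ℕ), fun x σ z k hx hσ0 hz hσ hk => ?_⟩
  obtain ⟨Q, hQz, hQD, hσQ, hQσ⟩ := hA z σ hz hσ0 hσ
  refine (primeTupleCount_le_brun_sieve (fun c hc => Finset.le_sup (f := id) hc) hQz hQD (by omega)
    hx hk).trans ?_
  gcongr

lemma isLittleO_log_mul_rpow {α : ℝ} (hα0 : 0 < α) (hα1 : α < 1) (a b : ℝ) :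
    (fun y => (a * log y + b) * (y ^ α + 1)) =o[atTop] fun y => y := by
  have hexp : 0 < 1 - α := sub_pos.2 hα1
  have hlog : (fun y => a * log y + b) =o[atTop] fun y => y ^ (1 - α) :=
    ((isLittleO_log_rpow_atTop hexp).const_mul_left a).add
      (isLittleO_const_left.2 (.inr (tendsto_norm_atTop_atTop.comp (tendsto_rpow_atTop hexp))))
  have hrpow : (fun y : ℝ => y ^ α + 1) =O[atTop] fun y => y ^ α :=
    (isBigO_refl _ _).add (isLittleO_const_left.2
      (.inr (tendsto_norm_atTop_atTop.comp (tendsto_rpow_atTop hα0)))).isBigO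
  refine (hlog.mul_isBigO hrpow).congr' .rfl ?_
  filter_upwards [eventually_gt_atTop 0] with y hy
  rw [← rpow_add hy, sub_add_cancel, rpow_one]

lemma eventually_exp_le_div_log_rpow {α : ℝ} (hα0 : 0 < α) (hα1 : α < 1) (a b c : ℝ) :
    ∀ᶠ x in atTop, exp ((a * log (log x) + b) * (log x ^ α + 1)) ≤ x / log x ^ c := by
  have hlittleO : (fun y => (a * log y + b) * (y ^ α + 1) + c * log y) =o[atTop] fun y => y :=
    (isLittleO_log_mul_rpow hα0 hα1 a b).add (isLittleO_log_id_atTop.const_mul_left c)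
  filter_upwards [tendsto_log_atTop.eventually (hlittleO.bound one_pos),
    tendsto_log_atTop.eventually_gt_atTop 0, eventually_gt_atTop 0] with x hbound hlog hx
  rw [one_mul, norm_of_nonneg hlog.le] at hbound
  rw [le_div_iff₀ (rpow_pos_of_pos hlog c), rpow_def_of_pos hlog c, ← exp_add,
    mul_comm (log (log x)) c]
  exact (exp_le_exp.2 ((le_abs_self _).trans hbound)).trans_eq (exp_log hx)

lemma natCeil_exp_le_exp_add_one {u : ℝ} (hu : 0 ≤ u) : (⌈exp u⌉₊ : ℝ) ≤ exp (u + 1) := by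
  rw [exp_add]
  nlinarith [Nat.ceil_lt_add_one (exp_pos u).le, one_le_exp hu, add_one_le_exp (1 : ℝ)]

lemma natCeil_exp_pow_le_exp {u w : ℝ} (hu : 0 ≤ u) {k : ℕ} (hk : k ≤ w) :
    (⌈exp u⌉₊ : ℝ) ^ k ≤ exp (w * (u + 1)) :=
  calc (⌈exp u⌉₊ : ℝ) ^ k ≤ exp (u + 1) ^ k := by
        gcongr
        exact natCeil_exp_le_exp_add_one hu
    _ = exp (k * (u + 1)) := (exp_nat_mul _ _).symm
    _ ≤ exp (w * (u + 1)) := by gcongr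

lemma mul_log_le_log_log_natCeil_exp_rpow {L : ℝ} (hL : 0 < L) (α : ℝ) :
    α * log L ≤ log (log ⌈exp (L ^ α)⌉₊) := by
  rw [← log_rpow hL]
  gcongr
  rw [le_log_iff_exp_le (by positivity)]
  exact Nat.le_ceil _

lemma exists_even_natCast_mem_Icc {w : ℝ} (hw : 0 ≤ w) :
    ∃ k : ℕ, Even k ∧ (k : ℝ) ∈ Set.Icc w (w + 2) := by
  refine ⟨2 * ⌈w / 2⌉₊, even_two_mul _, ?_⟩
  push_cast
  constructor <;> linarith [Nat.le_ceil (w / 2), Nat.ceil_lt_add_one (by positivity : 0 ≤ w / 2)]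

/-- Here `t = log log x`: a sieve level `k` of this order suffices for both terms of the main factor
in Brun's sieve to be `O((log x) ^ (-α κ))`. -/
lemma exp_neg_add_exp_mul_exp_le {α κ t A k : ℝ} (hα : α ≤ 1) (hκ : 0 ≤ κ) (ht : 0 ≤ t)
    (hk : 4 * κ * t ≤ k) :
    exp (-(κ * (α * t - A))) + exp (-k) * exp (exp 1 * (κ * (α * t - A + 1)))
      ≤ (exp (κ * A) + exp (exp 1 * κ * (1 - A))) * exp (-(t * (α * κ))) := by
  have hlevel : (exp 1 + 1) * (α * (κ * t)) ≤ k := by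
    have hκt := mul_nonneg hκ ht
    have hακt : α * (κ * t) ≤ κ * t := mul_le_of_le_one_left hκt hα
    nlinarith [exp_one_lt_three, exp_pos 1]
  rw [add_mul, ← exp_add, ← exp_add, ← exp_add]
  exact add_le_add (exp_le_exp.2 (by linarith)) (exp_le_exp.2 (by linarith))

lemma primeTupleCount_isBigO (C : Finset ℕ) {α : ℝ} (hα0 : 0 < α) (hα1 : α < 1) :
    (fun x => (primeTupleCount C x : ℝ)) =O[atTop] fun x => x / log x ^ (α * #C) := by
  obtain ⟨A, D, hcount⟩ := exists_primeTupleCount_le C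
  have hloglog := tendsto_log_atTop.comp tendsto_log_atTop
  refine .of_bound (1 + |D| + 2 * (exp (#C * A) + exp (exp 1 * #C * (1 - A))) + exp #C) ?_
  filter_upwards [eventually_exp_le_div_log_rpow hα0 hα1 0 1 (α * #C),
    eventually_exp_le_div_log_rpow hα0 hα1 (4 * #C) 2 (α * #C), eventually_ge_atTop 1,
    tendsto_log_atTop.eventually_gt_atTop 0, hloglog.eventually_ge_atTop 0,
    hloglog.eventually_ge_atTop (A / α)] with x hz hzk hx hlog ht htA
  simp only [Function.comp_apply, zero_mul, zero_add, one_mul] at hz ht htA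
  set t := log (log x)
  set V := x / log x ^ (α * #C) with hV_def
  set z := ⌈exp (log x ^ α)⌉₊
  obtain ⟨k, hk_even, hk⟩ := exists_even_natCast_mem_Icc (w := 4 * #C * t) (by positivity)
  have hu : 0 < log x ^ α := rpow_pos_of_pos hlog α
  have hV : 1 ≤ V := (one_le_exp (by positivity)).trans hz
  have hxV : x * exp (-(t * (α * #C))) = V := by
    rw [hV_def, rpow_def_of_pos hlog, exp_neg, div_eq_mul_inv]
  have hσ : α * t - A ≤ log (log z) - A :=
    sub_le_sub_right (mul_log_le_log_log_natCeil_exp_rpow hlog α) A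
  have hzk : (z : ℝ) ^ k ≤ V := (natCeil_exp_pow_le_exp hu.le hk.2).trans hzk
  have hmain := exp_neg_add_exp_mul_exp_le (A := A) hα1.le (Nat.cast_nonneg #C) ht hk.1
  rw [norm_of_nonneg (Nat.cast_nonneg _), norm_of_nonneg (zero_le_one.trans hV)]
  calc (primeTupleCount C x : ℝ)
      ≤ z + D + (x + 1) * (exp (-(#C * (α * t - A)))
          + exp (-k) * exp (exp 1 * (#C * (α * t - A + 1)))) + z ^ k * exp #C := by
        refine hcount x _ z k (by linarith) ?_ ?_ hσ hk_even
        · rwa [sub_nonneg, ← div_le_iff₀' hα0]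
        · exact Nat.lt_ceil.2 (by exact_mod_cast one_lt_exp_iff.2 hu)
    _ ≤ V + |D| * V + (2 * x) * ((exp (#C * A) + exp (exp 1 * #C * (1 - A)))
          * exp (-(t * (α * #C)))) + V * exp #C := by
        gcongr
        · exact (natCeil_exp_le_exp_add_one hu.le).trans hz
        · exact (le_abs_self D).trans (le_mul_of_one_le_right (abs_nonneg D) hV)
        · linarith
    _ = _ := by linear_combination 2 * (exp (#C * A) + exp (exp 1 * #C * (1 - A))) * hxV

lemma primeTupleCount_isLittleO {C : Finset ℕ} {k : ℕ} (hk : k < #C) :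
    (fun x => (primeTupleCount C x : ℝ)) =o[atTop] fun x => x / log x ^ k := by
  have hC : (0 : ℝ) < #C := by exact_mod_cast k.zero_le.trans_lt hk
  have hkC : (k : ℝ) + 1 ≤ #C := by exact_mod_cast hk
  have hbigO := primeTupleCount_isBigO C (α := (k + 1 / 2) / #C) (by positivity)
    (by rw [div_lt_one hC]; linarith)
  rw [div_mul_cancel₀ _ hC.ne'] at hbigO
  have hsqrt : (fun x => (log x ^ (1 / 2 : ℝ))⁻¹) =o[atTop] fun _ => (1 : ℝ) :=
    (isLittleO_one_iff ℝ).2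
      ((tendsto_rpow_atTop one_half_pos).comp tendsto_log_atTop).inv_tendsto_atTop
  refine hbigO.trans_isLittleO (((isBigO_refl (fun x => x / log x ^ k) atTop).mul_isLittleO
    hsqrt).congr' ?_ (by simp))
  filter_upwards [tendsto_log_atTop.eventually_gt_atTop 0] with x hx
  rw [rpow_add hx, rpow_natCast, div_mul_eq_div_div, div_eq_mul_inv (_ / _)]

end PrimeTuples

section Gaps

lemma nthPrime_prime (n : ℕ) : (nthPrime n).Prime := Nat.prime_nth_prime _

lemma nthPrime_lt_nthPrime {m n : ℕ} (hm : 1 ≤ m) (hmn : m < n) : nthPrime m < nthPrime n :=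
  Nat.nth_strictMono Nat.infinite_setOfPred_prime (by omega)

lemma nthPrime_injOn : Set.InjOn nthPrime {n | 1 ≤ n} := by
  intro m (hm : 1 ≤ m) n (hn : 1 ≤ n) hmn
  have := Nat.nth_injective Nat.infinite_setOfPred_prime hmn
  omega

lemma exists_nthPrime_eq_and_le_nthPrime_pred {r q : ℕ} (hr : r.Prime) (hq : q.Prime)
    (hrq : r < q) : ∃ n, 2 ≤ n ∧ nthPrime n = q ∧ r ≤ nthPrime (n - 1) := by
  have hcount : r.count Nat.Prime + 1 ≤ q.count Nat.Prime :=
    Nat.count_strict_mono hr hrq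
  refine ⟨q.count Nat.Prime + 1, by omega, Nat.nth_count hq, ?_⟩
  calc r = Nat.nth Nat.Prime (r.count Nat.Prime) := (Nat.nth_count hr).symm
    _ ≤ nthPrime (q.count Nat.Prime) :=
      (Nat.nth_strictMono Nat.infinite_setOfPred_prime).monotone (by omega)

lemma injOn_nthPrime_gap (x : ℝ) (d : ℕ) : Set.InjOn nthPrime
    {n : ℕ | 2 ≤ n ∧ (nthPrime n : ℝ) ≤ x ∧ nthPrime n - nthPrime (n - 1) = d} :=
  nthPrime_injOn.mono fun _ hn => Nat.one_le_of_lt hn.1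

lemma N_le_pi2 (x : ℝ) (d : ℕ) : N x d ≤ pi2 x d := by
  rw [N, ← (injOn_nthPrime_gap x d).ncard_image]
  refine Set.ncard_le_ncard ?_ ((finite_setOf_natCast_le x).subset fun q hq => hq.2.1)
  rintro q ⟨n, ⟨hn, hnx, hgap⟩, rfl⟩
  have hlt : nthPrime (n - 1) < nthPrime n := nthPrime_lt_nthPrime (by omega) (by omega)
  have hpred : nthPrime n - d = nthPrime (n - 1) := by omega
  exact ⟨nthPrime_prime n, hnx, hpred ▸ nthPrime_prime (n - 1)⟩

lemma pi3_eq_primeTupleCount (x : ℝ) (d d' : ℕ) : pi3 x d d' = primeTupleCount {0, d, d'} x := by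
  rw [pi3, primeTupleCount]
  congr 1
  ext q
  simp only [Set.mem_ofPred_eq, Finset.mem_insert, Finset.mem_singleton, forall_eq_or_imp,
    forall_eq, Nat.sub_zero]
  tauto

/-- If `q` and `q - d` are primes that are not consecutive, the predecessor of `q` lies strictly
between them and gives a triple of primes. -/
lemma pi2_le_N_add_sum_pi3 (x : ℝ) {d : ℕ} (hd : 0 < d) :
    pi2 x d ≤ N x d + ∑ d' ∈ Finset.Ioo 0 d, pi3 x d' d := by
  have hfin (P : ℕ → Prop) : {q : ℕ | q.Prime ∧ (q : ℝ) ≤ x ∧ P q}.Finite :=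
    (finite_setOf_natCast_le x).subset fun q hq => hq.2.1
  have hsub : {q : ℕ | q.Prime ∧ (q : ℝ) ≤ x ∧ (q - d).Prime} ⊆
      nthPrime '' {n : ℕ | 2 ≤ n ∧ (nthPrime n : ℝ) ≤ x ∧ nthPrime n - nthPrime (n - 1) = d} ∪
      ⋃ d' ∈ Finset.Ioo 0 d, {q : ℕ | q.Prime ∧ (q : ℝ) ≤ x ∧ (q - d').Prime ∧ (q - d).Prime} := by
    rintro q ⟨hq, hqx, hqd⟩
    have := hqd.pos
    obtain ⟨n, hn, rfl, hle⟩ := exists_nthPrime_eq_and_le_nthPrime_pred hqd hq (by omega)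
    have hlt : nthPrime (n - 1) < nthPrime n := nthPrime_lt_nthPrime (by omega) (by omega)
    rcases hle.eq_or_lt with heq | hgt
    · exact .inl ⟨n, ⟨hn, hqx, by omega⟩, rfl⟩
    · refine .inr (Set.mem_biUnion (x := nthPrime n - nthPrime (n - 1)) ?_ ⟨hq, hqx, ?_, hqd⟩)
      · exact Finset.mem_Ioo.2 ⟨by omega, by omega⟩
      · rw [Nat.sub_sub_self hlt.le]
        exact nthPrime_prime _
  have himage : (nthPrime '' {n : ℕ | 2 ≤ n ∧ (nthPrime n : ℝ) ≤ x ∧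
      nthPrime n - nthPrime (n - 1) = d}).Finite := by
    refine (finite_setOf_natCast_le x).subset ?_
    rintro q ⟨n, hn, rfl⟩
    exact hn.2.1
  calc pi2 x d ≤ _ := Set.ncard_le_ncard hsub
        (himage.union (Finset.finite_toSet _ |>.biUnion fun d' _ => hfin _))
    _ ≤ _ := Set.ncard_union_le _ _
    _ ≤ N x d + ∑ d' ∈ Finset.Ioo 0 d, pi3 x d' d :=
        add_le_add (injOn_nthPrime_gap x d).ncard_image.le (Finset.set_ncard_biUnion_le _ _)

lemma pi2_le_one_of_odd (x : ℝ) {d : ℕ} (hd : Odd d) : pi2 x d ≤ 1 := by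
  rw [pi2, ← Set.ncard_singleton (d + 2)]
  refine Set.ncard_le_ncard ?_ (Set.finite_singleton _)
  rintro q ⟨hq, -, hqd⟩
  have hqd_two := hqd.two_le
  have hd_pos := hd.pos
  have hq_odd : Odd q := hq.odd_of_ne_two (by omega)
  have hqd_eq : q - d = 2 := hqd.even_iff.1 (Nat.Odd.sub_odd hq_odd hd)
  rw [Set.mem_singleton_iff]
  omega

lemma pi3_isLittleO {d d' : ℕ} (hd : 0 < d) (hd' : 0 < d') (hdd' : d ≠ d') :
    (fun x => (pi3 x d d' : ℝ)) =o[atTop] fun x => x / log x ^ 2 := by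
  simp only [pi3_eq_primeTupleCount]
  refine primeTupleCount_isLittleO ?_
  rw [Finset.card_eq_three.2 ⟨0, d, d', hd.ne, hd'.ne, hdd', rfl⟩]
  norm_num

end Gaps

section SingularSeries

lemma C2_pos : 0 < C2 := by
  have hfactor (q : {q : ℕ // q.Prime ∧ 2 < q}) : 0 < 1 - 1 / ((q : ℕ) - 1 : ℝ) ^ 2 := by
    have hq : (3 : ℝ) ≤ (q : ℕ) := by exact_mod_cast q.2.2
    rw [sub_pos, div_lt_one (by nlinarith)]
    nlinarith
  have hinj : Function.Injective fun q : {q : ℕ // q.Prime ∧ 2 < q} => (q : ℕ) - 1 :=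
    fun p q hpq => Subtype.ext (Nat.pred_inj p.2.1.pos q.2.1.pos hpq)
  have hsummable : Summable fun q : {q : ℕ // q.Prime ∧ 2 < q} => -(1 / ((q : ℕ) - 1 : ℝ) ^ 2) :=
    ((summable_one_div_nat_pow.2 one_lt_two).comp_injective hinj).neg.congr fun q => by
      simp [Nat.cast_sub q.2.1.one_le]
  rw [C2, ← rexp_tsum_eq_tprod hfactor
    (by simpa [sub_eq_add_neg] using summable_log_one_add_of_summable hsummable)]
  exact exp_pos _

lemma singularSeries_pos {d : ℕ} (hd : Even d) : 0 < singularSeries d := by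
  rw [singularSeries, if_pos hd]
  refine mul_pos (mul_pos two_pos C2_pos) (Finset.prod_pos fun q hq => ?_)
  have hq2 : (2 : ℝ) < q := by exact_mod_cast (Finset.mem_filter.1 hq).2
  exact div_pos (by linarith) (by linarith)

lemma singularSeries_of_odd {d : ℕ} (hd : Odd d) : singularSeries d = 0 :=
  if_neg (Nat.not_even_iff_odd.2 hd)

lemma singularSeries_mul_prime {d p : ℕ} (hd : d ≠ 0) (hp : p.Prime) (hp2 : 2 < p)
    (hpd : ¬ p ∣ d) :
    singularSeries (d * p) = singularSeries d * ((p - 1) / (p - 2)) := by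
  have hprimeFactors : {q ∈ (d * p).primeFactors | 2 < q}
      = insert p {q ∈ d.primeFactors | 2 < q} := by
    rw [Nat.primeFactors_mul hd hp.ne_zero, hp.primeFactors]
    grind
  have heven : Even (d * p) ↔ Even d := by
    rw [Nat.even_mul, or_iff_left (Nat.not_even_iff_odd.2 (hp.odd_of_ne_two hp2.ne'))]
  rw [singularSeries, singularSeries, hprimeFactors, Finset.prod_insert (by simp [hpd]), ite_mul,
    zero_mul]
  simp only [heven]
  congr 1
  ring

lemma exists_singularSeries_lt {d : ℕ} (hd : 0 < d) :
    ∃ e > 0, singularSeries d < singularSeries e := by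
  rcases d.even_or_odd with hd_even | hd_odd
  · obtain ⟨p, hp_ge, hp⟩ := Nat.exists_infinite_primes (d + 3)
    have hp3 : (3 : ℝ) ≤ p := by exact_mod_cast (by omega : 3 ≤ p)
    refine ⟨d * p, Nat.mul_pos hd hp.pos, ?_⟩
    rw [singularSeries_mul_prime hd.ne' hp (by omega) fun h => by
      have := Nat.le_of_dvd hd h
      omega]
    refine lt_mul_of_one_lt_right (singularSeries_pos hd_even) ?_
    rw [one_lt_div (by linarith)]
    linarith
  · exact ⟨2, two_pos, singularSeries_of_odd hd_odd ▸ singularSeries_pos even_two⟩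

end SingularSeries

section JumpingChampions

/-- The Hardy–Littlewood asymptotic `π₂(x, d) ∼ 𝔖(d) x / (log x)²` for one fixed `d`, stated with a
quotient so that it makes sense when `𝔖(d) = 0`. -/
def PrimePairAsymptotic (d : ℕ) : Prop :=
  Tendsto (fun x : ℝ => (pi2 x d : ℝ) / (x / log x ^ 2)) atTop (𝓝 (singularSeries d))

lemma tendsto_div_log_pow_atTop (k : ℕ) : Tendsto (fun x : ℝ => x / log x ^ k) atTop atTop := by
  have hexp : Tendsto (fun y : ℝ => exp y / y ^ k) atTop atTop := tendsto_exp_div_pow_atTop k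
  refine (hexp.comp tendsto_log_atTop).congr' ?_
  filter_upwards [eventually_gt_atTop 0] with x hx
  simp [exp_log hx]

lemma PrimePairAsymptotic.of_odd {d : ℕ} (hd : Odd d) : PrimePairAsymptotic d := by
  rw [PrimePairAsymptotic, singularSeries_of_odd hd]
  have hbounded : (fun x => (pi2 x d : ℝ)) =O[atTop] fun _ => (1 : ℝ) :=
    .of_bound 1 (.of_forall fun x => by simpa using pi2_le_one_of_odd x hd)
  exact (hbounded.trans_isLittleO (isLittleO_const_left.2 (.inr
    (tendsto_norm_atTop_atTop.comp (tendsto_div_log_pow_atTop 2))))).tendsto_div_nhds_zero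

lemma PrimePairAsymptotic.of_abs_sub_le {d : ℕ}
    (h : ∀ ε > 0, ∀ᶠ x : ℝ in atTop, |(pi2 x d : ℝ) - singularSeries d * x / log x ^ 2|
      ≤ ε * singularSeries d * x / log x ^ 2) : PrimePairAsymptotic d := by
  simp only [mul_assoc, mul_div_assoc] at h
  have hlittleO : (fun x => (pi2 x d : ℝ) - singularSeries d * (x / log x ^ 2))
      =o[atTop] fun x => singularSeries d * (x / log x ^ 2) :=
    .of_bound fun ε hε => (h ε hε).mono fun x hx =>
      hx.trans (mul_le_mul_of_nonneg_left (le_abs_self _) hε.le)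
  refine tendsto_sub_nhds_zero_iff.1
    ((hlittleO.trans_isBigO (isBigO_const_mul_self _ _ _)).tendsto_div_nhds_zero.congr' ?_)
  filter_upwards [(tendsto_div_log_pow_atTop 2).eventually_ne_atTop 0] with x hx
  rw [sub_div, mul_div_cancel_right₀ _ hx]

lemma PrimePairAsymptotic.tendsto_N_div {d : ℕ} (h : PrimePairAsymptotic d) (hd : 0 < d) :
    Tendsto (fun x => (N x d : ℝ) / (x / log x ^ 2)) atTop (𝓝 (singularSeries d)) := by
  have htriples : (fun x => ∑ d' ∈ Finset.Ioo 0 d, (pi3 x d' d : ℝ))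
      =o[atTop] fun x => x / log x ^ 2 := .fun_sum fun d' hd' =>
    pi3_isLittleO (Finset.mem_Ioo.1 hd').1 hd (Finset.mem_Ioo.1 hd').2.ne
  have hlower := Tendsto.sub h htriples.tendsto_div_nhds_zero
  rw [sub_zero] at hlower
  refine tendsto_of_tendsto_of_tendsto_of_le_of_le' hlower h ?_ ?_
  all_goals filter_upwards [eventually_ge_atTop 0] with x hx
  · rw [← sub_div]
    gcongr
    rw [sub_le_iff_le_add]
    exact_mod_cast pi2_le_N_add_sum_pi3 x hd
  · gcongr
    exact N_le_pi2 x d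

lemma eventually_N_lt_N {d e : ℕ} (hd0 : 0 < d) (he0 : 0 < e) (hd : PrimePairAsymptotic d)
    (he : PrimePairAsymptotic e) (hde : singularSeries d < singularSeries e) :
    ∀ᶠ x in atTop, N x d < N x e := by
  filter_upwards [(hd.tendsto_N_div hd0).eventually_lt (he.tendsto_N_div he0) hde,
    (tendsto_div_log_pow_atTop 2).eventually_gt_atTop 0] with x hlt hx
  exact_mod_cast (div_lt_div_iff_of_pos_right hx).1 hlt

theorem jumping_champions_tend_to_infinity_general
    (hHL : ∀ d : ℕ, Even d → 0 < d → PrimePairAsymptotic d) (M : ℝ) :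
    ∀ᶠ x : ℝ in atTop, ∀ d : ℕ, JumpingChampion x d → M < d := by
  have hpair (d : ℕ) (hd : 0 < d) : PrimePairAsymptotic d :=
    d.even_or_odd.elim (hHL d · hd) .of_odd
  have hsmall : ∀ᶠ x : ℝ in atTop, ∀ d ∈ Finset.Iic ⌊M⌋₊, ¬ JumpingChampion x d := by
    refine (Finset.eventually_all _).2 fun d _ => ?_
    rcases d.eq_zero_or_pos with rfl | hd
    · exact .of_forall fun x h => h.1.ne' rfl
    · obtain ⟨e, he, hde⟩ := exists_singularSeries_lt hd
      filter_upwards [eventually_N_lt_N hd he (hpair d hd) (hpair e he) hde] with x hx hchampion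
      exact (hchampion.2 e).not_gt hx
  filter_upwards [hsmall] with x hx d hchampion
  by_contra! hdM
  exact hx d (Finset.mem_Iic.2 (Nat.le_floor hdM)) hchampion

end JumpingChampions

/-- Assuming the Hardy–Littlewood prime pair conjecture uniformly for `2 ≤ d ≤ (log x)²`,
the jumping champions tend to infinity. -/
theorem jumping_champions_tend_to_infinity
    (hHL : ∀ ε : ℝ, 0 < ε → ∃ x₀ : ℝ, ∀ x ≥ x₀, ∀ d : ℕ, Even d → 2 ≤ d →
      (d : ℝ) ≤ (Real.log x) ^ 2 →
      |(pi2 x d : ℝ) - singularSeries d * x / (Real.log x) ^ 2| ≤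
        ε * singularSeries d * x / (Real.log x) ^ 2) :
    ∀ M : ℝ, 0 < M → ∃ X : ℝ, ∀ x ≥ X, ∀ d : ℕ, JumpingChampion x d → M < (d : ℝ) := by
  refine fun M _ => eventually_atTop.1 (jumping_champions_tend_to_infinity_general
    (fun d hd hd0 => .of_abs_sub_le fun ε hε => ?_) M)
  filter_upwards [eventually_atTop.2 (hHL ε hε), ((tendsto_pow_atTop two_ne_zero).comp
    tendsto_log_atTop).eventually_ge_atTop (d : ℝ)] with x hx hdx
  exact hx d hd (Nat.le_of_dvd hd0 hd.two_dvd) hdx
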